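/- There exist constants c₁, c₂ ∈ ℕ such that for every 2-VASS V = (Q,T) there exist a natural number D ≤ (|Q| + ‖T‖)^{c₁} and a finite set R of linear path schemes over V such that, writing O = [D,∞)×[D,∞) ⊆ ℕ²: for every state q ∈ Q and all u,v ∈ O, q(u) →*_{ℕ²} q(v) holds if and only if q(u) →^R_{ℕ²} q(v) holds; moreover every ρ ∈ R has length at most (|Q| + ‖T‖)^{c₂} and at most two cycles. -/

import Mathlib

namespace VASS

/-- Integer vectors of dimension `d`. -/
abbrev Vec (d : ℕ) := Fin d → ℤ

/-- A transition of a `d`-VASS: source state, update vector, target state. -/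
abbrev Trans (d : ℕ) := ℕ × Vec d × ℕ

/-- The norm of a vector: maximum of absolute values of its components. -/
def vnorm {d : ℕ} (z : Vec d) : ℕ := Finset.univ.sup fun i => (z i).natAbs

/-- The norm of a transition set. -/
def tnorm {d : ℕ} (T : Finset (Trans d)) : ℕ := T.sup fun t => vnorm t.2.1

/-- The displacement of a word of transitions. -/
def disp {d : ℕ} (π : List (Trans d)) : Vec d := (π.map fun t => t.2.1).sum

/-- `IsPathFrom p q π` : `π` is a path from `p` to `q`. -/
def IsPathFrom {d : ℕ} : ℕ → ℕ → List (Trans d) → Prop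
  | p, q, [] => p = q
  | p, q, t :: rest => t.1 = p ∧ IsPathFrom t.2.2 q rest

/-- ℕ^d as a subset of ℤ^d. -/
def NatSet (d : ℕ) : Set (Vec d) := {v | ∀ i, 0 ≤ v i}

/-- `p(u) →^π_A q(v)`. -/
def Run {d : ℕ} (T : Finset (Trans d)) (A : Set (Vec d)) (p : ℕ) (u : Vec d)
    (q : ℕ) (v : Vec d) (π : List (Trans d)) : Prop :=
  (∀ t ∈ π, t ∈ T) ∧ IsPathFrom p q π ∧ u ∈ A ∧ v = u + disp π ∧
    ∀ i, 1 ≤ i → i ≤ π.length → u + disp (π.take i) ∈ A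

/-- `p(u) →*_A q(v)`. -/
def Reach {d : ℕ} (T : Finset (Trans d)) (A : Set (Vec d)) (p : ℕ) (u : Vec d)
    (q : ℕ) (v : Vec d) : Prop := ∃ π, Run T A p u q v π

/-- A linear path scheme `α₀ β₁* α₁ ⋯ β_k* α_k`, presented as the initial
segment `α₀` together with the list of pairs `(βᵢ, αᵢ)`. -/
abbrev LPS (d : ℕ) := List (Trans d) × List (List (Trans d) × List (Trans d))

/-- The underlying word `α₀ β₁ α₁ ⋯ β_k α_k` of a linear path scheme. -/
def lpsSupport {d : ℕ} (ρ : LPS d) : List (Trans d) :=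
  ρ.1 ++ (ρ.2.map fun s => s.1 ++ s.2).flatten

/-- The length of a linear path scheme. -/
def lpsLen {d : ℕ} (ρ : LPS d) : ℕ := (lpsSupport ρ).length

/-- The number of cycles of a linear path scheme. -/
def numCycles {d : ℕ} (ρ : LPS d) : ℕ := ρ.2.length

/-- `ρ` is a linear path scheme from `p` to `q` over the transition set `T`:
its underlying word uses transitions from `T` and is a path from `p` to `q`,
and each `βᵢ` is a cycle. -/
def IsLPSFrom {d : ℕ} (T : Finset (Trans d)) (p q : ℕ) (ρ : LPS d) : Prop :=
  (∀ t ∈ lpsSupport ρ, t ∈ T) ∧ IsPathFrom p q (lpsSupport ρ) ∧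
    ∀ s ∈ ρ.2, s.1 ≠ [] ∧ ∃ r, IsPathFrom r r s.1

/-- The word `α₀ β₁^{e₁} α₁ ⋯ β_k^{e_k} α_k` of a linear path scheme. -/
def lpsWord {d : ℕ} (ρ : LPS d) (e : List ℕ) : List (Trans d) :=
  ρ.1 ++ (List.zipWith (fun s n => (List.replicate n s.1).flatten ++ s.2) ρ.2 e).flatten

/-- Membership in the language of a linear path scheme. -/
def InLang {d : ℕ} (ρ : LPS d) (π : List (Trans d)) : Prop :=
  ∃ e : List ℕ, e.length = numCycles ρ ∧ π = lpsWord ρ e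

/-- `p(u) →^S_A q(v)` for a finite set `S` of linear path schemes. -/
def SReach {d : ℕ} (T : Finset (Trans d)) (S : Finset (LPS d)) (A : Set (Vec d))
    (p : ℕ) (u : Vec d) (q : ℕ) (v : Vec d) : Prop :=
  ∃ ρ ∈ S, ∃ π, InLang ρ π ∧ Run T A p u q v π

/-- δ(ρ): the set of displacements of words in the language of `ρ`. -/
def DispSet {d : ℕ} (ρ : LPS d) : Set (Vec d) := {z | ∃ π, InLang ρ π ∧ z = disp π}

/-- A quadrant of ℤ². -/
def IsQuadrant (Z : Set (Vec 2)) : Prop :=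
  ∃ ε : Fin 2 → Bool, Z = {v | ∀ i, if ε i then 0 ≤ v i else v i ≤ 0}

/-- A linear path scheme is zigzag-free if the displacements of all its cycles
lie in a single quadrant. -/
def ZigzagFree (ρ : LPS 2) : Prop :=
  ∃ Z, IsQuadrant Z ∧ ∀ s ∈ ρ.2, disp s.1 ∈ Z

/-!
A closed walk through `q` decomposes into a polynomially short skeleton, which still visits every
state of the walk, and a list of short cycles attached to it. A balancing argument, applied to one
coordinate after the other, groups the cycles into blocks of polynomial size whose displacements
all lie in one quadrant. Two extremal block displacements span all the others as a cone, so all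
but polynomially many blocks can be traded for repetitions of two cycles. These two cycles exist
because some multiple of the displacement of a block is the displacement of a single short cycle:
if the cycles of the block are parallel, one of them can be repeated; otherwise the displacement
of the block is interior to the cone spanned by one of its cycles and the others together, so
a large multiple of it also absorbs the displacement of the skeleton.

In the resulting scheme both cycles lie in the same quadrant. Each counter is then almost monotone
along its words, so that a run between configurations far from the axes never leaves `ℕ²`.
-/

section Vectors

variable {d : ℕ} {M : ℕ}

theorem vnorm_le_iff {z : Vec d} : vnorm z ≤ M ↔ ∀ i, |z i| ≤ M := by
  simp only [vnorm, Finset.sup_le_iff, Finset.mem_univ, true_imp_iff]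
  exact forall_congr' fun i => by rw [Int.abs_eq_natAbs, Nat.cast_le]

theorem vnorm_pos_iff {z : Vec d} : 0 < vnorm z ↔ z ≠ 0 := by
  rw [Nat.pos_iff_ne_zero, ne_eq, ← Nat.le_zero, vnorm_le_iff, not_iff_not]
  simp [funext_iff]

theorem vnorm_sum_le (l : List (Vec d)) (h : ∀ z ∈ l, vnorm z ≤ M) :
    vnorm l.sum ≤ l.length * M := by
  induction l with
  | nil => simp [vnorm]
  | cons z l ih =>
    obtain ⟨hz, hl⟩ := List.forall_mem_cons.1 h
    refine vnorm_le_iff.2 fun i => ?_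
    have hzi := vnorm_le_iff.1 hz i
    have hli := vnorm_le_iff.1 (ih hl) i
    calc |(z :: l).sum i| ≤ |z i| + |l.sum i| := by simpa using abs_add_le (z i) (l.sum i)
      _ ≤ ((z :: l).length * M : ℕ) := by
        push_cast [List.length_cons] at hli ⊢
        linarith

/-- The vectors with `vnorm` at most `M`, as a finite set. -/
noncomputable def normBall (d M : ℕ) : Finset (Vec d) := Finset.Icc (fun _ => -(M : ℤ)) fun _ => M

theorem mem_normBall {z : Vec d} : z ∈ normBall d M ↔ vnorm z ≤ M := by
  simp only [normBall, Finset.mem_Icc, Pi.le_def, vnorm_le_iff, abs_le, forall_and]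

theorem card_normBall : (normBall d M).card = (2 * M + 1) ^ d := by
  have hside : ((M : ℤ) + 1 + M).toNat = 2 * M + 1 := by omega
  simp [normBall, Pi.card_Icc, hside]

/-- The closed orthant of `ℤ^d` in which the `i`-th coordinate has sign `s i`. Unlike
`IsQuadrant`, it is available in every dimension and comes with its additive structure. -/
def orthant (s : Fin d → ℤˣ) : AddSubmonoid (Vec d) where
  carrier := {z | ∀ i, 0 ≤ (s i : ℤ) * z i}
  zero_mem' := by simp
  add_mem' {x y} hx hy i := by simpa [mul_add] using add_nonneg (hx i) (hy i)

theorem mem_orthant {s : Fin d → ℤˣ} {z : Vec d} :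
    z ∈ orthant s ↔ ∀ i, 0 ≤ (s i : ℤ) * z i := Iff.rfl

theorem isQuadrant_orthant (s : Fin 2 → ℤˣ) : IsQuadrant (orthant s) := by
  refine ⟨fun i => decide (s i = 1), Set.ext fun z => ?_⟩
  refine mem_orthant.trans (forall_congr' fun i => ?_)
  rcases Int.units_eq_one_or (s i) with h | h <;> simp [h]

theorem IsQuadrant.exists_eq_orthant {Z : Set (Vec 2)} (hZ : IsQuadrant Z) :
    ∃ s : Fin 2 → ℤˣ, Z = orthant s := by
  obtain ⟨ε, rfl⟩ := hZ
  refine ⟨fun i => if ε i then 1 else -1, Set.ext fun z => ?_⟩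
  refine Iff.trans (forall_congr' fun i => ?_) mem_orthant.symm
  cases ε i <;> simp

end Vectors

section Lists

variable {α : Type*}

theorem length_flatten_le {l : List (List α)} {m : ℕ} (h : ∀ x ∈ l, x.length ≤ m) :
    l.flatten.length ≤ l.length * m := by
  rw [List.length_flatten]
  simpa using List.sum_le_card_nsmul (l.map List.length) m (by simpa using h)

theorem length_flatten_replicate (n : ℕ) (l : List α) :
    (List.replicate n l).flatten.length = n * l.length := by
  simp [List.length_flatten]

theorem finite_lists_length_le {s : Set α} (hs : s.Finite) (n : ℕ) :
    {l : List α | (∀ x ∈ l, x ∈ s) ∧ l.length ≤ n}.Finite := by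
  have : Finite s := hs
  refine ((List.finite_length_le s n).image (List.map Subtype.val)).subset ?_
  rintro l ⟨hl, hn⟩
  exact ⟨l.attach.map fun x => ⟨x.1, hl x.1 x.2⟩, by simpa using hn, by simp⟩

end Lists

section Displacement

variable {d : ℕ} {T : Finset (Trans d)}

theorem disp_append (a b : List (Trans d)) : disp (a ++ b) = disp a + disp b := by
  simp [disp]

theorem disp_flatten (L : List (List (Trans d))) : disp L.flatten = (L.map disp).sum := by
  simp only [disp, List.map_flatten, List.sum_flatten, List.map_map]
  rfl

theorem disp_flatten_replicate (n : ℕ) (a : List (Trans d)) :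
    disp (List.replicate n a).flatten = n • disp a := by
  simp [disp_flatten]

theorem vnorm_le_tnorm {t : Trans d} (ht : t ∈ T) : vnorm t.2.1 ≤ tnorm T :=
  Finset.le_sup (f := fun t : Trans d => vnorm t.2.1) ht

theorem vnorm_disp_le {π : List (Trans d)} (hπ : ∀ t ∈ π, t ∈ T) :
    vnorm (disp π) ≤ π.length * tnorm T := by
  simpa [disp] using vnorm_sum_le (π.map fun t => t.2.1)
    (List.forall_mem_map.2 fun t ht => vnorm_le_tnorm (hπ t ht))

end Displacement

section Paths

variable {d : ℕ} {T : Finset (Trans d)} {p q r : ℕ} {a b π : List (Trans d)}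

theorem isPathFrom_append :
    IsPathFrom p q (a ++ b) ↔ ∃ r, IsPathFrom p r a ∧ IsPathFrom r q b := by
  induction a generalizing p with
  | nil => simp [IsPathFrom]
  | cons t a ih => simp [IsPathFrom, ih, and_assoc]

theorem IsPathFrom.target_unique {q' : ℕ} (h₁ : IsPathFrom p q π) (h₂ : IsPathFrom p q' π) :
    q = q' := by
  induction π generalizing p with
  | nil => exact h₁.symm.trans h₂
  | cons t π ih => exact ih h₁.2 h₂.2

theorem IsPathFrom.source_unique {p' q' : ℕ} (hne : π ≠ []) (h₁ : IsPathFrom p q π)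
    (h₂ : IsPathFrom p' q' π) : p = p' := by
  cases π with
  | nil => exact absurd rfl hne
  | cons t π => exact h₁.1.symm.trans h₂.1

/-- `π` is a path from `p` to `q` all of whose transitions belong to `T`. -/
def IsPathIn (T : Finset (Trans d)) (p q : ℕ) (π : List (Trans d)) : Prop :=
  IsPathFrom p q π ∧ ∀ t ∈ π, t ∈ T

theorem isPathIn_nil : IsPathIn T p p [] := ⟨rfl, by simp⟩

theorem isPathIn_append :
    IsPathIn T p q (a ++ b) ↔ ∃ r, IsPathIn T p r a ∧ IsPathIn T r q b := by
  simp only [IsPathIn, isPathFrom_append, List.forall_mem_append]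
  grind

theorem IsPathIn.append (ha : IsPathIn T p r a) (hb : IsPathIn T r q b) :
    IsPathIn T p q (a ++ b) :=
  isPathIn_append.2 ⟨r, ha, hb⟩

theorem IsPathIn.flatten_replicate (h : IsPathIn T r r a) (n : ℕ) :
    IsPathIn T r r (List.replicate n a).flatten := by
  induction n with
  | zero => exact isPathIn_nil
  | succ n ih =>
    rw [List.replicate_succ, List.flatten_cons]
    exact h.append ih

theorem IsPathIn.exists_take_drop (h : IsPathIn T p q π) (i : ℕ) :
    ∃ r, IsPathIn T p r (π.take i) ∧ IsPathIn T r q (π.drop i) :=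
  isPathIn_append.1 <| (π.take_append_drop i).symm ▸ h

/-- The states visited by a path `π` that starts in `p`. -/
def visited (p : ℕ) (π : List (Trans d)) : List ℕ := p :: π.map fun t => t.2.2

theorem visited_append : visited p (a ++ b) = visited p a ++ b.map fun t => t.2.2 := by
  simp [visited]

theorem IsPathFrom.target_mem_visited (h : IsPathFrom p q π) : q ∈ visited p π := by
  induction π generalizing p with
  | nil => exact List.mem_cons.2 (.inl h.symm)
  | cons t π ih => exact List.mem_cons_of_mem _ (ih h.2)

theorem IsPathIn.exists_split_of_mem_visited (h : IsPathIn T p q π) (hr : r ∈ visited p π) :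
    ∃ a b, π = a ++ b ∧ IsPathIn T p r a ∧ IsPathIn T r q b := by
  induction π generalizing p with
  | nil =>
    obtain rfl : r = p := by simpa [visited] using hr
    exact ⟨[], [], rfl, isPathIn_nil, h⟩
  | cons t π ih =>
    rcases List.mem_cons.1 hr with rfl | hr
    · exact ⟨[], t :: π, rfl, isPathIn_nil, h⟩
    · obtain ⟨ht, hπ⟩ := List.forall_mem_cons.1 h.2
      obtain ⟨a, b, rfl, ha, hb⟩ := ih ⟨h.1.2, hπ⟩ hr
      exact ⟨t :: a, b, rfl, ⟨⟨h.1.1, ha.1⟩, List.forall_mem_cons.2 ⟨ht, ha.2⟩⟩, hb⟩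

theorem IsPathIn.target_mem {Q : Finset ℕ} (hT : ∀ t ∈ T, t.2.2 ∈ Q) (hp : p ∈ Q)
    (h : IsPathIn T p q π) : q ∈ Q := by
  rcases List.mem_cons.1 h.1.target_mem_visited with rfl | hq
  · exact hp
  · obtain ⟨t, ht, rfl⟩ := List.mem_map.1 hq
    exact hT t (h.2 t ht)

end Paths

section Skeletons

variable {d : ℕ} {Q : Finset ℕ} {T : Finset (Trans d)} {p q : ℕ} {π π₀ : List (Trans d)}

theorem exists_short_cycle (hT : ∀ t ∈ T, t.2.2 ∈ Q) (hp : p ∈ Q) (hπ : IsPathIn T p q π)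
    (hlen : Q.card ≤ π.length) :
    ∃ a b c r, π = a ++ b ++ c ∧ b ≠ [] ∧ (a ++ b).length ≤ Q.card ∧
      IsPathIn T p r a ∧ IsPathIn T r r b ∧ IsPathIn T r q c := by
  choose state hleft hright using hπ.exists_take_drop
  obtain ⟨i, hi, j, hj, hne, heq⟩ : ∃ i ∈ Finset.range (Q.card + 1),
      ∃ j ∈ Finset.range (Q.card + 1), i ≠ j ∧ state i = state j :=
    Finset.exists_ne_map_eq_of_card_lt_of_maps_to (by simp)
      fun i _ => (hleft i).target_mem hT hp
  wlog hij : i < j generalizing i j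
  · exact this j hj i hi hne.symm heq.symm (by omega)
  rw [Finset.mem_range] at hi hj
  have hsplit : π.take j = π.take i ++ (π.take j).drop i := by
    conv_lhs => rw [← List.take_append_drop i (π.take j), List.take_take, min_eq_left hij.le]
  obtain ⟨r, hr, hcycle⟩ := isPathIn_append.1 (hsplit ▸ hleft j)
  obtain rfl : state i = r := (hleft i).1.target_unique hr.1
  refine ⟨π.take i, (π.take j).drop i, π.drop j, state i, ?_, ?_, ?_, hleft i, ?_, ?_⟩
  · rw [← hsplit, List.take_append_drop]
  · rw [← List.length_pos_iff, List.length_drop, List.length_take]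
    omega
  · rw [← hsplit, List.length_take]
    omega
  · simpa only [heq] using hcycle
  · simpa only [heq] using hright j

/-- Among the first `Q.card` transitions, either some target is not in `S` and can be added to it,
or there is a cycle all of whose states belong to `S`. -/
theorem exists_removable_cycle (hT : ∀ t ∈ T, t.2.2 ∈ Q) (S : Finset ℕ) (hp : p ∈ Q)
    (hπ : IsPathIn T p q π) (hlen : Q.card * ((Q \ S).card + 1) ≤ π.length) :
    ∃ a b c r, π = a ++ b ++ c ∧ b ≠ [] ∧ b.length ≤ Q.card ∧
      IsPathIn T p r a ∧ IsPathIn T r r b ∧ IsPathIn T r q c ∧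
      ∀ t ∈ b, t.2.2 ∈ S ∨ t.2.2 ∈ visited p a := by
  induction hm : (Q \ S).card using Nat.strong_induction_on generalizing S p π with
  | _ m ih =>
  by_cases hseen : ∀ t ∈ π.take Q.card, t.2.2 ∈ S
  · obtain ⟨a, b, c, r, rfl, hb, hab, ha, hbr, hc⟩ :=
      exists_short_cycle hT hp hπ (le_trans (Nat.le_mul_of_pos_right _ (by omega)) hlen)
    refine ⟨a, b, c, r, rfl, hb, ?_, ha, hbr, hc, fun t ht => .inl (hseen t ?_)⟩
    · rw [List.length_append] at hab
      omega
    · rw [List.take_append, List.take_of_length_le hab]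
      exact List.mem_append_left _ (List.mem_append_right a ht)
  · push Not at hseen
    obtain ⟨t, ht, htS⟩ := hseen
    obtain ⟨r₀, hpre, hpost⟩ := hπ.exists_take_drop Q.card
    have htQ : t.2.2 ∈ Q := hT t (hpre.2 t ht)
    have hcard : (Q \ insert t.2.2 S).card + 1 = m := by
      rw [Finset.sdiff_insert, Finset.card_erase_add_one (Finset.mem_sdiff.2 ⟨htQ, htS⟩), hm]
    have hrest : Q.card * ((Q \ insert t.2.2 S).card + 1) ≤ (π.drop Q.card).length := by
      rw [hm, mul_add_one] at hlen
      rw [hcard, List.length_drop]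
      omega
    obtain ⟨a, b, c, r, hdrop, hb, hbl, ha, hbr, hc, htargets⟩ :=
      ih _ (by omega) (insert t.2.2 S) (hpre.target_mem hT hp) hpost hrest rfl
    refine ⟨π.take Q.card ++ a, b, c, r, ?_, hb, hbl, hpre.append ha, hbr, hc, fun t' ht' => ?_⟩
    · rw [List.append_assoc, List.append_assoc, ← List.append_assoc a, ← hdrop,
        List.take_append_drop]
    · have hvis : visited p (π.take Q.card ++ a) = p :: (π.take Q.card).map (·.2.2) ++
          a.map (·.2.2) := by simp [visited]
      have htarget := hpre.1.target_mem_visited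
      have := List.mem_map_of_mem (f := (·.2.2)) ht
      grind [visited]

/-- `c` is a cycle of `T` of length at most `n` through one of the states in `R`. -/
def IsAttached (T : Finset (Trans d)) (n : ℕ) (R : List ℕ) (c : List (Trans d)) : Prop :=
  c.length ≤ n ∧ ∃ r ∈ R, IsPathIn T r r c

theorem exists_skeleton (hT : ∀ t ∈ T, t.2.2 ∈ Q) (hp : p ∈ Q) (hπ : IsPathIn T p q π) :
    ∃ (π₀ : List (Trans d)) (E : List (List (Trans d))),
      IsPathIn T p q π₀ ∧ π₀.length ≤ Q.card * (Q.card + 1) ∧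
      (∀ c ∈ E, IsAttached T Q.card (visited p π₀) c) ∧ disp π = disp π₀ + disp E.flatten := by
  suffices h : ∃ (π₀ : List (Trans d)) (E : List (List (Trans d))),
      IsPathIn T p q π₀ ∧ π₀.length ≤ Q.card * (Q.card + 1) ∧ visited p π ⊆ visited p π₀ ∧
      (∀ c ∈ E, IsAttached T Q.card (visited p π₀) c) ∧ disp π = disp π₀ + disp E.flatten by
    obtain ⟨π₀, E, h₀, hlen, -, hE⟩ := h
    exact ⟨π₀, E, h₀, hlen, hE⟩
  induction hn : π.length using Nat.strong_induction_on generalizing π with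
  | _ n ih =>
  rcases le_or_gt π.length (Q.card * (Q.card + 1)) with hshort | hlong
  · exact ⟨π, [], hπ, hshort, List.Subset.refl _, by simp, by simp [disp]⟩
  · obtain ⟨a, b, c, r, rfl, hb, hbl, ha, hbr, hc, htargets⟩ :=
      exists_removable_cycle hT ∅ hp hπ (by simpa using hlong.le)
    have hvis : visited p (a ++ b ++ c) ⊆ visited p (a ++ c) := by
      intro x hx
      simp only [visited_append, List.mem_append, List.mem_map] at hx ⊢
      grind
    have hlt : (a ++ c).length < n := by
      have := List.length_pos_iff.2 hb
      simp only [List.length_append] at hn ⊢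
      omega
    obtain ⟨π₀, E, hπ₀, hlen, hsub, hE, hdisp⟩ := ih _ hlt (ha.append hc) rfl
    refine ⟨π₀, b :: E, hπ₀, hlen, List.Subset.trans hvis hsub, List.forall_mem_cons.2 ⟨?_, hE⟩, ?_⟩
    · refine ⟨hbl, r, hsub ?_, hbr⟩
      rw [visited_append]
      exact List.mem_append_left _ ha.1.target_mem_visited
    · rw [List.flatten_cons, disp_append b, add_left_comm, ← hdisp]
      simp only [disp_append]
      abel

theorem exists_insertion {n : ℕ} {E : List (List (Trans d))} (hπ₀ : IsPathIn T p q π₀)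
    (hE : ∀ c ∈ E, IsAttached T n (visited p π₀) c) :
    ∃ π₁, IsPathIn T p q π₁ ∧ π₁.length ≤ π₀.length + E.length * n ∧
      visited p π₀ ⊆ visited p π₁ ∧ disp π₁ = disp π₀ + disp E.flatten := by
  induction E with
  | nil => exact ⟨π₀, hπ₀, by simp, List.Subset.refl _, by simp [disp]⟩
  | cons c E ih =>
    obtain ⟨⟨hcn, r, hr, hc⟩, hE⟩ := List.forall_mem_cons.1 hE
    obtain ⟨π₁, hπ₁, hlen, hsub, hdisp⟩ := ih hE
    obtain ⟨a, b, rfl, ha, hb⟩ := hπ₁.exists_split_of_mem_visited (hsub hr)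
    refine ⟨a ++ c ++ b, (ha.append hc).append hb, ?_, List.Subset.trans hsub fun x hx => ?_, ?_⟩
    · simp only [List.length_append, List.length_cons] at hlen ⊢
      linarith
    · simp only [visited_append, List.mem_append] at hx ⊢
      tauto
    · rw [List.flatten_cons, disp_append c, add_left_comm, ← hdisp]
      simp only [disp_append]
      abel

end Skeletons

section Blocks

variable {α : Type*} {M : ℕ}

/-- The one-dimensional Steinitz lemma: always continue with a summand of the sign opposite to
that of the current partial sum. -/
theorem exists_perm_abs_partial_sum_le (g : α → ℤ) {l : List α} {s : ℤ}
    (hg : ∀ x ∈ l, |g x| ≤ M) (hs : |s| ≤ M) (hsum : s + (l.map g).sum = 0) :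
    ∃ l', l.Perm l' ∧ ∀ k, |s + ((l'.take k).map g).sum| ≤ M := by
  induction hn : l.length generalizing l s with
  | zero =>
    obtain rfl := List.length_eq_zero_iff.1 hn
    exact ⟨[], .refl _, by simpa using hs⟩
  | succ n ih =>
    have hne : l ≠ [] := by rintro rfl; simp at hn
    obtain ⟨x, hx, hsx⟩ : ∃ x ∈ l, |s + g x| ≤ M := by
      rcases lt_or_ge 0 s with hpos | hneg
      · obtain ⟨x, hx, hlt⟩ : ∃ x ∈ l, g x < 0 :=
          List.exists_lt_of_sum_lt g (fun _ => 0) (by simp; omega)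
        exact ⟨x, hx, abs_le.2 (by grind)⟩
      · obtain ⟨x, hx, hle⟩ : ∃ x ∈ l, 0 ≤ g x :=
          List.exists_le_of_sum_le hne (fun _ => 0) g (by simp; omega)
        exact ⟨x, hx, abs_le.2 (by grind)⟩
    obtain ⟨b, c, rfl⟩ := List.append_of_mem hx
    have hmiddle : (b ++ x :: c).Perm (x :: (b ++ c)) := List.perm_middle
    obtain ⟨l', hl', hpartial⟩ := ih (l := b ++ c) (s := s + g x)
      (fun y hy => hg y (hmiddle.mem_iff.2 (List.mem_cons_of_mem x hy))) hsx
      (by rw [← hsum, (hmiddle.map g).sum_eq]; simp [add_assoc])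
      (by simpa [hn] using hmiddle.length_eq.symm)
    refine ⟨x :: l', hmiddle.trans (hl'.cons x), fun k => ?_⟩
    cases k with
    | zero => simpa using hs
    | succ k => simpa [add_assoc] using hpartial k

theorem exists_zero_sum_block (g : α → ℤ) {l : List α} (hne : l ≠ [])
    (hg : ∀ x ∈ l, |g x| ≤ M) (hsum : (l.map g).sum = 0) :
    ∃ B R, B ≠ [] ∧ l.Perm (B ++ R) ∧ B.length ≤ 2 * M + 1 ∧ (B.map g).sum = 0 := by
  rcases le_or_gt l.length (2 * M + 1) with hshort | hlong
  · exact ⟨l, [], hne, by simp, hshort, hsum⟩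
  obtain ⟨l', hl', hpartial⟩ := exists_perm_abs_partial_sum_le g hg (s := 0) (by simp) (by simpa)
  obtain ⟨i, hi, j, hj, hij, heq⟩ : ∃ i ∈ Finset.range (2 * M + 2),
      ∃ j ∈ Finset.range (2 * M + 2), i ≠ j ∧
        ((l'.take i).map g).sum = ((l'.take j).map g).sum := by
    refine Finset.exists_ne_map_eq_of_card_lt_of_maps_to (t := Finset.Icc (-(M : ℤ)) M) ?_ ?_
    · rw [Int.card_Icc, Finset.card_range]
      omega
    · intro k _
      simpa [abs_le] using hpartial k
  wlog hlt : i < j generalizing i j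
  · exact this j hj i hi hij.symm heq.symm (by omega)
  rw [Finset.mem_range] at hi hj
  have hsplit : l'.take j = l'.take i ++ (l'.take j).drop i := by
    conv_lhs => rw [← List.take_append_drop i (l'.take j), List.take_take, min_eq_left hlt.le]
  have hlen := hl'.length_eq
  refine ⟨(l'.take j).drop i, l'.take i ++ l'.drop j, ?_, ?_, ?_, ?_⟩
  · rw [← List.length_pos_iff, List.length_drop, List.length_take]
    omega
  · refine hl'.trans ?_
    conv_lhs => rw [← List.take_append_drop j l', hsplit]
    rw [← List.append_assoc]
    exact List.perm_append_comm.append_right _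
  · rw [List.length_drop, List.length_take]
    omega
  · rw [hsplit, List.map_append, List.sum_append] at heq
    linarith

theorem exists_zero_sum_blocks (g : α → ℤ) {l : List α} (hg : ∀ x ∈ l, |g x| ≤ M)
    (hsum : (l.map g).sum = 0) :
    ∃ Bs : List (List α), l.Perm Bs.flatten ∧
      ∀ B ∈ Bs, B.length ≤ 2 * M + 1 ∧ (B.map g).sum = 0 := by
  induction hn : l.length using Nat.strong_induction_on generalizing l with
  | _ n ih =>
  rcases eq_or_ne l [] with rfl | hne
  · exact ⟨[], by simp, by simp⟩
  obtain ⟨B, R, hB, hperm, hBlen, hBsum⟩ := exists_zero_sum_block g hne hg hsum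
  have hlt : R.length < n := by
    have := List.length_pos_iff.2 hB
    have := hperm.length_eq
    rw [List.length_append] at this
    omega
  have hRsum : (R.map g).sum = 0 := by
    rw [(hperm.map g).sum_eq, List.map_append, List.sum_append, hBsum, zero_add] at hsum
    exact hsum
  obtain ⟨Bs, hBs, hblocks⟩ := ih _ hlt
    (fun x hx => hg x (hperm.mem_iff.2 (List.mem_append_right B hx))) hRsum rfl
  exact ⟨B :: Bs, hperm.trans (hBs.append_left B),
    List.forall_mem_cons.2 ⟨⟨hBlen, hBsum⟩, hblocks⟩⟩

/-- Padding the list with summands `-1` (encoded by `none`) reduces to zero-sum blocks; removing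
the padding afterwards only increases the sum of a block. -/
theorem exists_nonneg_blocks (g : α → ℤ) (hM : 0 < M) {l : List α} (hg : ∀ x ∈ l, |g x| ≤ M)
    (hsum : 0 ≤ (l.map g).sum) :
    ∃ Bs : List (List α), l.Perm Bs.flatten ∧
      ∀ B ∈ Bs, B.length ≤ 2 * M + 1 ∧ 0 ≤ (B.map g).sum := by
  let g' : Option α → ℤ := fun o => o.elim (-1) g
  have hunpad (B : List (Option α)) : (B.map g').sum ≤ (B.reduceOption.map g).sum := by
    induction B with
    | nil => simp
    | cons o B ih => cases o <;> simp [g'] <;> linarith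
  obtain ⟨m, hm⟩ := Int.eq_ofNat_of_zero_le hsum
  have hg' : ∀ o ∈ l.map some ++ List.replicate m none, |g' o| ≤ M := by
    simp only [List.mem_append, List.mem_map, List.mem_replicate]
    rintro o (⟨x, hx, rfl⟩ | ⟨-, rfl⟩)
    · exact hg x hx
    · simpa [g'] using Nat.one_le_iff_ne_zero.2 hM.ne'
  have hsum' : ((l.map some ++ List.replicate m none).map g').sum = 0 := by
    simp [g', Function.comp_def, hm]
  obtain ⟨Bs, hperm, hblocks⟩ := exists_zero_sum_blocks g' hg' hsum'
  refine ⟨Bs.map List.reduceOption, ?_, List.forall_mem_map.2 fun B hB => ⟨?_, ?_⟩⟩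
  · simpa [List.reduceOption, Function.comp_def, List.filterMap_map, List.filterMap_flatten,
      Function.id_def] using hperm.filterMap id
  · exact (List.reduceOption_length_le B).trans (hblocks B hB).1
  · exact (hblocks B hB).2 ▸ hunpad B

theorem exists_sign_blocks (g : α → ℤ) (hM : 0 < M) {l : List α} (hg : ∀ x ∈ l, |g x| ≤ M) :
    ∃ (σ : ℤˣ) (Bs : List (List α)), l.Perm Bs.flatten ∧
      ∀ B ∈ Bs, B.length ≤ 2 * M + 1 ∧ 0 ≤ (σ : ℤ) * (B.map g).sum := by
  obtain ⟨σ, hσ⟩ : ∃ σ : ℤˣ, 0 ≤ (σ : ℤ) * (l.map g).sum := by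
    rcases le_total 0 (l.map g).sum with h | h
    · exact ⟨1, by simpa using h⟩
    · exact ⟨-1, by simpa using h⟩
  obtain ⟨Bs, hperm, hblocks⟩ := exists_nonneg_blocks (fun x => (σ : ℤ) * g x) hM
    (by simpa [abs_mul, Int.isUnit_iff_abs_eq.1 σ.isUnit] using hg)
    (by simpa [List.sum_map_mul_left] using hσ)
  exact ⟨σ, Bs, hperm, by simpa [List.sum_map_mul_left] using hblocks⟩

/-- A bound on the length of the blocks into which `exists_orthant_blocks` partitions a list of
`d`-dimensional vectors of norm at most `M`. -/
def blockSize (M : ℕ) : ℕ → ℕ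
  | 0 => 1
  | d + 1 => (2 * (blockSize M d * M) + 1) * blockSize M d

theorem blockSize_pos (M d : ℕ) : 0 < blockSize M d := by
  induction d with
  | zero => exact one_pos
  | succ d ih => exact Nat.mul_pos (Nat.succ_pos _) ih

theorem exists_orthant_blocks {d : ℕ} (g : α → Vec d) (hM : 0 < M) {l : List α}
    (hg : ∀ x ∈ l, vnorm (g x) ≤ M) :
    ∃ (s : Fin d → ℤˣ) (Bs : List (List α)), l.Perm Bs.flatten ∧
      ∀ B ∈ Bs, B.length ≤ blockSize M d ∧ (B.map g).sum ∈ orthant s := by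
  induction d with
  | zero =>
    refine ⟨finZeroElim, l.map fun x => [x], by simp [← List.flatMap_def], ?_⟩
    exact List.forall_mem_map.2 fun x _ => ⟨le_rfl, finZeroElim⟩
  | succ d ih =>
    obtain ⟨s, Bs, hperm, hBs⟩ := ih (fun x => Fin.tail (g x))
      fun x hx => vnorm_le_iff.2 fun i => vnorm_le_iff.1 (hg x hx) i.succ
    have hsum : ∀ B ∈ Bs, vnorm (B.map g).sum ≤ blockSize M d * M := fun B hB =>
      calc vnorm (B.map g).sum ≤ (B.map g).length * M := vnorm_sum_le _ <|
            List.forall_mem_map.2 fun x hx =>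
              hg x (hperm.mem_iff.2 (List.mem_flatten_of_mem hB hx))
        _ ≤ blockSize M d * M := by
            rw [List.length_map]
            exact Nat.mul_le_mul_right M (hBs B hB).1
    obtain ⟨σ, Cs, hperm', hCs⟩ := exists_sign_blocks (fun B : List α => (B.map g).sum 0)
      (Nat.mul_pos (blockSize_pos M d) hM) fun B hB => vnorm_le_iff.1 (hsum B hB) 0
    have hmem (C) (hC : C ∈ Cs) (B) (hB : B ∈ C) : B ∈ Bs :=
      hperm'.mem_iff.2 (List.mem_flatten_of_mem hC hB)
    refine ⟨Fin.cons σ s, Cs.map List.flatten, ?_, List.forall_mem_map.2 fun C hC => ⟨?_, ?_⟩⟩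
    · rw [← List.flatten_flatten]
      exact hperm.trans hperm'.flatten
    · exact (length_flatten_le fun B hB => (hBs B (hmem C hC B hB)).1).trans
        (Nat.mul_le_mul_right _ (hCs C hC).1)
    · have htail : (C.map fun B => (B.map fun x => Fin.tail (g x)).sum).sum ∈ orthant s :=
        list_sum_mem (List.forall_mem_map.2 fun B hB => (hBs B (hmem C hC B hB)).2)
      rw [List.map_flatten, List.sum_flatten, List.map_map]
      refine mem_orthant.2 (Fin.cases ?_ fun i => ?_)
      · simpa [Pi.list_sum_apply, Function.comp_def] using (hCs C hC).2
      · simpa [Pi.list_sum_apply, Function.comp_def, Fin.tail] using mem_orthant.1 htail i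

end Blocks

section Plane

variable {K : ℕ} {s : Fin 2 → ℤˣ} {x y z θ : Vec 2}

/-- The determinant of the matrix with columns `x` and `y`. -/
def cross (x y : Vec 2) : ℤ := x 0 * y 1 - x 1 * y 0

theorem cross_comm (x y : Vec 2) : cross y x = -cross x y := by
  unfold cross
  ring

theorem cross_smul (x y z : Vec 2) : cross x y • z = cross z y • x + cross x z • y := by
  ext i
  fin_cases i <;> simp [cross] <;> ring

theorem dotProduct_self_smul_of_cross_eq_zero (h : cross x z = 0) :
    (x ⬝ᵥ x) • z = (z ⬝ᵥ x) • x := by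
  unfold cross at h
  ext i
  fin_cases i <;> simp [dotProduct, Fin.sum_univ_two]
  · linear_combination -x 1 * h
  · linear_combination x 0 * h

theorem abs_mul_apply_le (hx : vnorm x ≤ K) (hy : vnorm y ≤ K) (i j : Fin 2) :
    |x i * y j| ≤ K ^ 2 := by
  rw [abs_mul, sq]
  exact mul_le_mul (vnorm_le_iff.1 hx i) (vnorm_le_iff.1 hy j) (abs_nonneg _) (by positivity)

theorem abs_cross_le (hx : vnorm x ≤ K) (hy : vnorm y ≤ K) : |cross x y| ≤ 2 * K ^ 2 := by
  have := abs_sub (x 0 * y 1) (x 1 * y 0)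
  have := abs_mul_apply_le hx hy
  unfold cross
  linarith [this 0 1, this 1 0]

theorem dotProduct_le (hx : vnorm x ≤ K) (hy : vnorm y ≤ K) : x ⬝ᵥ y ≤ 2 * K ^ 2 := by
  have h := abs_mul_apply_le hx hy
  rw [dotProduct, Fin.sum_univ_two]
  linarith [le_of_abs_le (h 0 0), le_of_abs_le (h 1 1)]

theorem dotProduct_self_pos {d : ℕ} {x : Vec d} (hx : x ≠ 0) : 0 < x ⬝ᵥ x :=
  lt_of_le_of_ne (Finset.sum_nonneg fun i _ => mul_self_nonneg (x i))
    (Ne.symm (dotProduct_self_eq_zero.not.2 hx))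

theorem units_mul_nonneg_iff {s : ℤˣ} {a : ℤ} : 0 ≤ (s : ℤ) * a ↔ (s : ℤ) * a = |a| := by
  rw [← abs_eq_self, abs_mul, Int.isUnit_iff_abs_eq.1 s.isUnit, one_mul, eq_comm]

theorem dotProduct_nonneg_of_mem_orthant {d : ℕ} {s : Fin d → ℤˣ} {x y : Vec d}
    (hx : x ∈ orthant s) (hy : y ∈ orthant s) : 0 ≤ x ⬝ᵥ y := by
  refine Finset.sum_nonneg fun i _ => ?_
  have := mul_nonneg (hx i) (hy i)
  rwa [mul_mul_mul_comm, ← Units.val_mul, Int.units_mul_self, Units.val_one, one_mul] at this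

/-- The slope of `x`, relative to the `ℓ¹` norm so that it is meaningful for every `x ≠ 0`. -/
def slope (x : Vec 2) : ℚ := |x 1| / (|x 0| + |x 1|)

theorem slope_le_slope_iff (hx : x ∈ orthant s) (hy : y ∈ orthant s) (hx0 : x ≠ 0)
    (hy0 : y ≠ 0) : slope x ≤ slope y ↔ 0 ≤ ((s 0 * s 1 : ℤˣ) : ℤ) * cross x y := by
  have hpos {z : Vec 2} (hz : z ≠ 0) : (0 : ℚ) < |z 0| + |z 1| := by
    have hi : z 0 ≠ 0 ∨ z 1 ≠ 0 := by
      contrapose! hz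
      ext i
      fin_cases i <;> simp [hz]
    norm_cast
    rcases hi with hi | hi <;> positivity
  rw [slope, slope, div_le_div_iff₀ (hpos hx0) (hpos hy0), cross, Units.val_mul]
  norm_cast
  rw [← units_mul_nonneg_iff.1 (hx 0), ← units_mul_nonneg_iff.1 (hx 1),
    ← units_mul_nonneg_iff.1 (hy 0), ← units_mul_nonneg_iff.1 (hy 1), ← sub_nonneg, Units.val_mul]
  ring_nf

theorem nsmul_mem_closure_of_slope_eq (hx : x ∈ orthant s) (hz : z ∈ orthant s) (hx0 : x ≠ 0)
    (hz0 : z ≠ 0) (h : slope z = slope x) :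
    (x ⬝ᵥ x).toNat • z ∈ AddSubmonoid.closure {x} := by
  have hcross : cross x z = 0 := by
    have hle := (slope_le_slope_iff hx hz hx0 hz0).1 h.ge
    have hge := (slope_le_slope_iff hz hx hz0 hx0).1 h.le
    rw [cross_comm x z, mul_neg, neg_nonneg] at hge
    exact (mul_eq_zero.1 (hge.antisymm hle)).resolve_left (Units.ne_zero _)
  have := dotProduct_self_smul_of_cross_eq_zero hcross
  lift x ⬝ᵥ x to ℕ using dotProduct_nonneg_of_mem_orthant hx hx with m
  lift z ⬝ᵥ x to ℕ using dotProduct_nonneg_of_mem_orthant hz hx with n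
  simp only [natCast_zsmul] at this
  exact AddSubmonoid.mem_closure_singleton.2 ⟨n, this.symm⟩

theorem nsmul_mem_closure_of_slope_le (hx : x ∈ orthant s) (hy : y ∈ orthant s)
    (hz : z ∈ orthant s) (hx0 : x ≠ 0) (hy0 : y ≠ 0) (hz0 : z ≠ 0)
    (hxz : slope x ≤ slope z) (hzy : slope z ≤ slope y) :
    (cross x y).natAbs • z ∈ AddSubmonoid.closure {x, y} := by
  have hD := (slope_le_slope_iff hx hy hx0 hy0).1 (hxz.trans hzy)
  have hq := (slope_le_slope_iff hx hz hx0 hz0).1 hxz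
  have hp := (slope_le_slope_iff hz hy hz0 hy0).1 hzy
  have key := cross_smul x y z
  rw [units_mul_nonneg_iff] at hD hq hp
  refine (AddSubmonoid.mem_closure_pair _ _ _).2 ⟨(cross z y).natAbs, (cross x z).natAbs, ?_⟩
  simp only [← natCast_zsmul, Int.natCast_natAbs, ← hD, ← hq, ← hp, mul_smul, key, smul_add]

theorem exists_conic_pair {S : Set (Vec 2)} (hfin : S.Finite) (hne : ∃ x ∈ S, x ≠ 0)
    (hs : ∀ x ∈ S, x ∈ orthant s) (hK : ∀ x ∈ S, vnorm x ≤ K) :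
    ∃ x ∈ S, ∃ y ∈ S, x ≠ 0 ∧ y ≠ 0 ∧ ∃ e : ℕ, 0 < e ∧ e ≤ 2 * K ^ 2 ∧
      ∀ z ∈ S, e • z ∈ AddSubmonoid.closure {x, y} := by
  have hfin₀ : {x ∈ S | x ≠ 0}.Finite := hfin.subset (Set.sep_subset _ _)
  obtain ⟨x, ⟨hx, hx0⟩, hmin⟩ := Set.exists_min_image _ slope hfin₀ hne
  obtain ⟨y, ⟨hy, hy0⟩, hmax⟩ := Set.exists_max_image _ slope hfin₀ hne
  refine ⟨x, hx, y, hy, hx0, hy0, ?_⟩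
  rcases eq_or_ne (cross x y) 0 with hxy | hxy
  · have hslope : slope y ≤ slope x :=
      (slope_le_slope_iff (hs y hy) (hs x hx) hy0 hx0).2 (by simp [cross_comm x y, hxy])
    refine ⟨(x ⬝ᵥ x).toNat, ?_, ?_, fun z hz => ?_⟩
    · exact Int.pos_iff_toNat_pos.1 (dotProduct_self_pos hx0)
    · simpa using dotProduct_le (hK x hx) (hK x hx)
    · rcases eq_or_ne z 0 with rfl | hz0
      · simp
      · refine AddSubmonoid.closure_mono (by simp) (nsmul_mem_closure_of_slope_eq
          (hs x hx) (hs z hz) hx0 hz0 (le_antisymm ?_ (hmin z ⟨hz, hz0⟩)))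
        exact (hmax z ⟨hz, hz0⟩).trans hslope
  · refine ⟨(cross x y).natAbs, Int.natAbs_pos.2 hxy, ?_, fun z hz => ?_⟩
    · zify
      exact abs_cross_le (hK x hx) (hK y hy)
    · rcases eq_or_ne z 0 with rfl | hz0
      · simp
      · exact nsmul_mem_closure_of_slope_le (hs x hx) (hs y hy) (hs z hz) hx0 hy0 hz0
          (hmin z ⟨hz, hz0⟩) (hmax z ⟨hz, hz0⟩)

theorem exists_nsmul_eq_add (hx : vnorm x ≤ K) (hy : vnorm y ≤ K) (hθ : vnorm θ ≤ K)
    (hxy : cross x y ≠ 0) :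
    ∃ c e₁ e₂ : ℕ, 0 < c ∧ c ≤ 2 * K ^ 2 ∧ e₁ ≤ 10 * K ^ 2 ∧ e₂ ≤ 10 * K ^ 2 ∧
      (4 * K ^ 2 + 1) • y = c • θ + e₁ • x + e₂ • (y - x) := by
  let σ := (cross x y).sign
  have hσ (a : ℤ) : |σ * a| = |a| := by simp [σ, abs_mul, Int.abs_sign_of_ne_zero hxy]
  have hcross : (cross x y).natAbs • θ = (σ * cross θ y) • x + (σ * cross x θ) • y := by
    rw [← natCast_zsmul, Int.natCast_natAbs, ← Int.sign_mul_self_eq_abs, mul_smul, cross_smul,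
      smul_add, mul_smul, mul_smul]
  have hx_coeff := abs_le.1 ((hσ (cross θ y)).trans_le (abs_cross_le hθ hy))
  have hy_coeff := abs_le.1 ((hσ (cross x θ)).trans_le (abs_cross_le hx hθ))
  have hK : 0 < K ^ 2 := by
    have := (abs_pos.2 hxy).trans_le (abs_cross_le hx hy)
    exact_mod_cast pos_of_mul_pos_right this (by norm_num)
  generalize σ * cross θ y = a at *
  generalize σ * cross x θ = b at *
  obtain ⟨e₁, he₁⟩ := Int.eq_ofNat_of_zero_le (a := 4 * K ^ 2 + 1 - b - a) (by linarith)
  obtain ⟨e₂, he₂⟩ := Int.eq_ofNat_of_zero_le (a := 4 * K ^ 2 + 1 - b) (by linarith)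
  refine ⟨(cross x y).natAbs, e₁, e₂, Int.natAbs_pos.2 hxy, ?_, ?_, ?_, ?_⟩
  · zify
    exact abs_cross_le hx hy
  · zify at hK ⊢
    linarith
  · zify at hK ⊢
    linarith
  · rw [hcross, ← natCast_zsmul x, ← natCast_zsmul (y - x), ← he₁, ← he₂]
    module

end Plane

section Reduction

variable {α G : Type*} [AddCommMonoid G]

theorem exists_short_sublist_sum_add_mem (A : AddSubmonoid G) (V : Finset G) {e : ℕ} (he : 0 < e)
    (g : α → G) (l : List α) (hV : ∀ x ∈ l, g x ∈ V) (hA : ∀ x ∈ l, e • g x ∈ A) :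
    ∃ l' ⊆ l, l'.length ≤ e * V.card ∧ ∃ w ∈ A, (l.map g).sum = (l'.map g).sum + w := by
  classical
  induction V using Finset.induction_on generalizing l with
  | empty =>
    obtain rfl : l = [] := List.eq_nil_iff_forall_not_mem.2 fun x hx => by simpa using hV x hx
    exact ⟨[], by simp, by simp, 0, A.zero_mem, by simp⟩
  | insert v V hv ih =>
    obtain ⟨F, R, hperm, hF, hR⟩ : ∃ F R, l.Perm (F ++ R) ∧ (∀ x ∈ F, g x = v) ∧
        ∀ x ∈ R, g x ≠ v :=
      ⟨_, _, (List.filter_append_perm (fun x => g x = v) l).symm, by simp, by simp⟩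
    have hRl : R ⊆ l := fun x hx => hperm.mem_iff.2 (List.mem_append_right F hx)
    have hFl : F ⊆ l := fun x hx => hperm.mem_iff.2 (List.mem_append_left R hx)
    obtain ⟨R', hR', hlen, w, hw, hsum⟩ := ih R
      (fun x hx => Finset.mem_of_mem_insert_of_ne (hV x (hRl hx)) (hR x hx))
      (fun x hx => hA x (hRl hx))
    have hFsum {F' : List α} (h : F' ⊆ F) : (F'.map g).sum = F'.length • v := by
      rw [List.map_congr_left fun x hx => hF x (h hx), List.map_const', List.sum_replicate]
    have hw' : (F.length / e) • e • v ∈ A := by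
      rcases F with - | ⟨x, F⟩
      · simp
      · rw [← hF x List.mem_cons_self]
        exact A.nsmul_mem (hA x (hFl List.mem_cons_self)) _
    refine ⟨F.take (F.length % e) ++ R', ?_, ?_, _, A.add_mem hw' hw, ?_⟩
    · exact List.append_subset.2
        ⟨List.Subset.trans (List.take_subset _ _) hFl, List.Subset.trans hR' hRl⟩
    · have := Nat.mod_lt F.length he
      rw [Finset.card_insert_of_notMem hv, List.length_append, List.length_take, mul_add_one]
      omega
    · have hdiv : (F.length % e) • v + (F.length / e) • e • v = F.length • v := by
        rw [← mul_nsmul, ← add_nsmul, Nat.mod_add_div]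
      rw [(hperm.map g).sum_eq, List.map_append, List.sum_append, hFsum (List.Subset.refl F), hsum,
        List.map_append, List.sum_append, hFsum (List.take_subset _ _), List.length_take,
        min_eq_left (Nat.mod_le _ _), ← hdiv]
      abel

end Reduction

section Realization

variable {T : Finset (Trans 2)} {K q : ℕ} {π₀ : List (Trans 2)} {B : List (List (Trans 2))}

/-- A block is a short list of short cycles through the states in `R`, each of small
displacement, whose total displacement is small as well. The parameter `K` bounds everything. -/
structure IsBlock {d : ℕ} (T : Finset (Trans d)) (K : ℕ) (R : List ℕ)
    (B : List (List (Trans d))) : Prop where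
  length_le : B.length ≤ K
  isAttached : ∀ c ∈ B, IsAttached T K R c
  vnorm_disp_le : ∀ c ∈ B, vnorm (disp c) ≤ K
  vnorm_disp_flatten_le : vnorm (disp B.flatten) ≤ K

theorem disp_flatten_dotProduct {d : ℕ} (B : List (List (Trans d))) (y : Vec d) :
    disp B.flatten ⬝ᵥ y = (B.map fun c => disp c ⬝ᵥ y).sum := by
  induction B with
  | nil => simp [disp]
  | cons c B ih => simp [disp_append, add_dotProduct, ih]

/-- Some cycle of the block has a positive component in the direction of the displacement of the
block, so its repetitions realize multiples of the latter. -/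
theorem IsBlock.exists_cycle_of_parallel {R : List ℕ} (hB : IsBlock T K R B)
    (hne : disp B.flatten ≠ 0) (hpar : ∀ c ∈ B, cross (disp B.flatten) (disp c) = 0) :
    ∃ r ∈ R, ∃ (β : List (Trans 2)) (N : ℕ), IsPathIn T r r β ∧ β.length ≤ 2 * K ^ 3 ∧
      0 < N ∧ N ≤ 2 * K ^ 2 ∧ disp β = N • disp B.flatten := by
  set y := disp B.flatten
  obtain ⟨c, hc, hpos⟩ : ∃ c ∈ B, 0 < disp c ⬝ᵥ y := by
    refine List.exists_lt_of_sum_lt (fun _ => 0) _ ?_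
    rw [← disp_flatten_dotProduct, List.map_const', List.sum_replicate, smul_zero]
    exact dotProduct_self_pos hne
  obtain ⟨hcK, r, hr, hcycle⟩ := hB.isAttached c hc
  have hN : disp c ⬝ᵥ y ≤ 2 * K ^ 2 :=
    dotProduct_le (hB.vnorm_disp_le c hc) hB.vnorm_disp_flatten_le
  have hm : y ⬝ᵥ y ≤ 2 * K ^ 2 :=
    dotProduct_le hB.vnorm_disp_flatten_le hB.vnorm_disp_flatten_le
  have hdisp := dotProduct_self_smul_of_cross_eq_zero (hpar c hc)
  lift disp c ⬝ᵥ y to ℕ using hpos.le with N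
  lift y ⬝ᵥ y to ℕ using (dotProduct_self_pos hne).le with m
  refine ⟨r, hr, (List.replicate m c).flatten, N, hcycle.flatten_replicate m, ?_,
    by exact_mod_cast hpos, by exact_mod_cast hN, ?_⟩
  · rw [length_flatten_replicate]
    calc m * c.length ≤ 2 * K ^ 2 * K := Nat.mul_le_mul (by exact_mod_cast hm) hcK
      _ = 2 * K ^ 3 := by ring
  · simpa only [disp_flatten_replicate, natCast_zsmul] using hdisp

theorem IsBlock.exists_attached_cycles {d : ℕ} {T : Finset (Trans d)} {B : List (List (Trans d))}
    {R : List ℕ} (hB : IsBlock T K R B) {x : List (Trans d)} (hx : x ∈ B) {e e₁ e₂ : ℕ}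
    (he₁ : e₁ ≤ e) (he₂ : e₂ ≤ e) :
    ∃ E : List (List (Trans d)), (∀ c ∈ E, IsAttached T K R c) ∧ E.length ≤ e * K ∧
      disp E.flatten = e₁ • disp x + e₂ • (disp B.flatten - disp x) := by
  obtain ⟨B₁, B₂, rfl⟩ := List.append_of_mem hx
  have hlen : 1 + (B₁ ++ B₂).length ≤ K := by
    simpa [add_comm, add_left_comm] using hB.length_le
  refine ⟨List.replicate e₁ x ++ (List.replicate e₂ (B₁ ++ B₂)).flatten, fun c hc => ?_, ?_, ?_⟩
  · refine hB.isAttached c ?_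
    simp only [List.mem_append, List.mem_replicate, List.mem_flatten, List.mem_cons] at hc ⊢
    grind
  · calc (List.replicate e₁ x ++ (List.replicate e₂ (B₁ ++ B₂)).flatten).length
        = e₁ * 1 + e₂ * (B₁ ++ B₂).length := by simp
      _ ≤ e * 1 + e * (B₁ ++ B₂).length := by gcongr
      _ = e * (1 + (B₁ ++ B₂).length) := by ring
      _ ≤ e * K := by gcongr
  · have hrest : disp (B₁ ++ x :: B₂).flatten - disp x = disp (B₁ ++ B₂).flatten := by
      simp only [List.flatten_append, List.flatten_cons, disp_append]
      abel
    rw [hrest, List.flatten_append, disp_append, disp_flatten_replicate, List.flatten_flatten,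
      List.map_replicate, disp_flatten_replicate]

/-- If the displacements of a cycle of the block and of the block itself are linearly
independent, then the displacement of `π₀` can be compensated by inserting copies of that
cycle and of the rest of the block. -/
theorem IsBlock.exists_cycle_of_not_parallel (hB : IsBlock T K (visited q π₀) B)
    (hπ₀ : IsPathIn T q q π₀) (hlen : π₀.length ≤ K) (hnorm : vnorm (disp π₀) ≤ K)
    {x : List (Trans 2)} (hx : x ∈ B) (hcross : cross (disp x) (disp B.flatten) ≠ 0) :
    ∃ β, IsPathIn T q q β ∧ β.length ≤ 12 * K ^ 4 ∧
      disp β = (4 * K ^ 2 + 1) • disp B.flatten := by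
  have hK : 0 < K := (List.length_pos_of_mem hx).trans_le hB.length_le
  obtain ⟨m, e₁, e₂, hm, hmK, he₁, he₂, heq⟩ :=
    exists_nsmul_eq_add (hB.vnorm_disp_le x hx) hB.vnorm_disp_flatten_le hnorm hcross
  obtain ⟨E, hE, hElen, hEdisp⟩ := hB.exists_attached_cycles hx he₁ he₂
  obtain ⟨π₁, hπ₁, hπ₁len, -, hπ₁disp⟩ := exists_insertion hπ₀ hE
  obtain ⟨m, rfl⟩ := Nat.exists_eq_succ_of_ne_zero hm.ne'
  refine ⟨π₁ ++ (List.replicate m π₀).flatten, hπ₁.append (hπ₀.flatten_replicate m), ?_, ?_⟩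
  · rw [List.length_append, length_flatten_replicate]
    calc π₁.length + m * π₀.length ≤ (m + 1) * π₀.length + E.length * K := by linarith
      _ ≤ 2 * K ^ 2 * K + 10 * K ^ 2 * K * K := by gcongr
      _ = 2 * K ^ 3 + 10 * K ^ 4 := by ring
      _ ≤ 2 * K ^ 4 + 10 * K ^ 4 := by
        gcongr
        all_goals omega
      _ = 12 * K ^ 4 := by ring
  · rw [heq, disp_append, hπ₁disp, hEdisp, disp_flatten_replicate, succ_nsmul]
    abel

theorem IsBlock.exists_cycle (hB : IsBlock T K (visited q π₀) B)
    (hπ₀ : IsPathIn T q q π₀) (hlen : π₀.length ≤ K) (hnorm : vnorm (disp π₀) ≤ K)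
    (hne : disp B.flatten ≠ 0) :
    ∃ r ∈ visited q π₀, ∃ (β : List (Trans 2)) (N : ℕ), IsPathIn T r r β ∧
      β.length ≤ 12 * K ^ 4 ∧ 0 < N ∧ N ≤ 5 * K ^ 2 ∧ disp β = N • disp B.flatten := by
  have hK : 0 < K := (vnorm_pos_iff.2 hne).trans_le hB.vnorm_disp_flatten_le
  by_cases hpar : ∀ c ∈ B, cross (disp B.flatten) (disp c) = 0
  · obtain ⟨r, hr, β, N, hβ, hβlen, hNpos, hN, hdisp⟩ := hB.exists_cycle_of_parallel hne hpar
    refine ⟨r, hr, β, N, hβ, hβlen.trans ?_, hNpos, by omega, hdisp⟩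
    exact Nat.mul_le_mul (by norm_num) (Nat.pow_le_pow_right hK (by norm_num))
  · push Not at hpar
    obtain ⟨x, hx, hcross⟩ := hpar
    obtain ⟨β, hβ, hβlen, hdisp⟩ := hB.exists_cycle_of_not_parallel hπ₀ hlen hnorm hx
      (by rwa [cross_comm, neg_ne_zero])
    have : 0 < K ^ 2 := by positivity
    exact ⟨q, List.mem_cons_self, β, _, hβ, hβlen, Nat.succ_pos _, by omega, hdisp⟩

end Realization

section Schemes

variable {d : ℕ} {T : Finset (Trans d)} {p q : ℕ} {w α α' β : List (Trans d)}
  {cs : List (List (Trans d) × List (Trans d))}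

theorem inLang_nil : InLang (α, []) w ↔ w = α := by
  simp [InLang, lpsWord, numCycles]

theorem inLang_cons : InLang (α, (β, α') :: cs) w ↔
    ∃ n w', InLang (α', cs) w' ∧ w = α ++ ((List.replicate n β).flatten ++ w') := by
  constructor
  · rintro ⟨_ | ⟨n, e⟩, he, rfl⟩
    · simp [numCycles] at he
    · exact ⟨n, _, ⟨e, by simpa [numCycles] using he, rfl⟩, by simp [lpsWord]⟩
  · rintro ⟨n, w', ⟨e, he, rfl⟩, rfl⟩
    exact ⟨n :: e, by simpa [numCycles] using he, by simp [lpsWord]⟩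

theorem lpsSupport_cons : lpsSupport (α, (β, α') :: cs) = α ++ (β ++ lpsSupport (α', cs)) := by
  simp [lpsSupport]

theorem lpsLen_nil : lpsLen ((α, []) : LPS d) = α.length := by
  simp [lpsLen, lpsSupport]

theorem lpsLen_cons :
    lpsLen (α, (β, α') :: cs) = α.length + (β.length + lpsLen (α', cs)) := by
  simp [lpsLen, lpsSupport_cons]

theorem isLPSFrom_nil : IsLPSFrom T p q (α, []) ↔ IsPathIn T p q α := by
  simp [IsLPSFrom, IsPathIn, lpsSupport, and_comm]

theorem isLPSFrom_cons : IsLPSFrom T p q (α, (β, α') :: cs) ↔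
    ∃ r, IsPathIn T p r α ∧ β ≠ [] ∧ IsPathIn T r r β ∧ IsLPSFrom T r q (α', cs) := by
  have hiff (ρ : LPS d) (p) : IsLPSFrom T p q ρ ↔
      IsPathIn T p q (lpsSupport ρ) ∧ ∀ s ∈ ρ.2, s.1 ≠ [] ∧ ∃ r, IsPathFrom r r s.1 := by
    simp only [IsLPSFrom, IsPathIn]
    tauto
  simp only [hiff, lpsSupport_cons, isPathIn_append, List.forall_mem_cons]
  constructor
  · rintro ⟨⟨r, hα, r', hβ, hρ⟩, ⟨hne, r'', hcycle⟩, hcs⟩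
    obtain rfl := hβ.1.source_unique hne hcycle
    obtain rfl := hβ.1.target_unique hcycle
    exact ⟨_, hα, hne, hβ, hρ, hcs⟩
  · rintro ⟨r, hα, hne, hβ, hρ, hcs⟩
    exact ⟨⟨r, hα, r, hβ, hρ⟩, ⟨hne, r, hβ.1⟩, hcs⟩

theorem IsLPSFrom.isPathIn {ρ : LPS d} (hρ : IsLPSFrom T p q ρ) (hw : InLang ρ w) :
    IsPathIn T p q w := by
  obtain ⟨α, cs⟩ := ρ
  induction cs generalizing α p w with
  | nil =>
    rw [inLang_nil.1 hw]
    exact isLPSFrom_nil.1 hρ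
  | cons s cs ih =>
    obtain ⟨r, hα, -, hβ, hcs⟩ := isLPSFrom_cons.1 hρ
    obtain ⟨n, w', hw', rfl⟩ := inLang_cons.1 hw
    exact hα.append ((hβ.flatten_replicate n).append (ih _ hcs hw'))

theorem finite_isLPSFrom_lpsLen_le (T : Finset (Trans d)) (F k : ℕ) :
    {ρ : LPS d | (∃ p q, IsLPSFrom T p q ρ) ∧ lpsLen ρ ≤ F ∧ numCycles ρ ≤ k}.Finite := by
  have hwords := finite_lists_length_le T.finite_toSet F
  refine (hwords.prod (finite_lists_length_le (hwords.prod hwords) k)).subset ?_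
  rintro ⟨α, cs⟩ ⟨⟨p, q, hT, -⟩, hlen, hk⟩
  have hmem (w : List (Trans d)) (hw : w.Sublist (lpsSupport (α, cs))) :
      w ∈ {l : List (Trans d) | (∀ t ∈ l, t ∈ (T : Set (Trans d))) ∧ l.length ≤ F} :=
    ⟨fun t ht => hT t (hw.subset ht), hw.length_le.trans hlen⟩
  have hpair (s) (hs : s ∈ cs) : (s.1 ++ s.2).Sublist (lpsSupport (α, cs)) :=
    (List.sublist_flatten_of_mem (List.mem_map_of_mem (f := fun s => s.1 ++ s.2) hs)).trans
      (List.sublist_append_right _ _)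
  exact ⟨hmem α (List.sublist_append_left _ _), fun s hs =>
    ⟨hmem s.1 ((List.sublist_append_left _ _).trans (hpair s hs)),
      hmem s.2 ((List.sublist_append_right _ _).trans (hpair s hs))⟩, hk⟩

/-- Along the word `w`, counted from either of its ends, no coordinate moves further than `L`
against its direction in the orthant of `s`. -/
def AlmostMonotone (s : Fin d → ℤˣ) (L : ℕ) (w : List (Trans d)) : Prop :=
  ∀ a b, a ++ b = w → ∀ i,
    -(L : ℤ) ≤ (s i : ℤ) * disp a i ∧ -(L : ℤ) ≤ (s i : ℤ) * disp b i

variable {s : Fin d → ℤˣ} {L L₁ L₂ : ℕ} {w₁ w₂ : List (Trans d)}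

theorem almostMonotone_of_forall_mem (hw : ∀ t ∈ w, t ∈ T) :
    AlmostMonotone s (w.length * tnorm T) w := by
  have hsmall (a : List (Trans d)) (ha : a.Sublist w) (i : Fin d) :
      -((w.length * tnorm T : ℕ) : ℤ) ≤ (s i : ℤ) * disp a i := by
    have hnorm := (vnorm_disp_le fun t ht => hw t (ha.subset ht)).trans
      (Nat.mul_le_mul_right (tnorm T) ha.length_le)
    refine (abs_le.1 ?_).1
    rw [abs_mul, Int.isUnit_iff_abs_eq.1 (s i).isUnit, one_mul]
    exact vnorm_le_iff.1 hnorm i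
  rintro a b rfl i
  exact ⟨hsmall a (List.sublist_append_left a b) i, hsmall b (List.sublist_append_right a b) i⟩

theorem AlmostMonotone.append (h₁ : AlmostMonotone s L₁ w₁) (h₂ : AlmostMonotone s L₂ w₂) :
    AlmostMonotone s (L₁ + L₂) (w₁ ++ w₂) := by
  rintro a b hab i
  have hleft := (h₁ w₁ [] (by simp) i).1
  have hright := (h₂ [] w₂ rfl i).2
  rcases List.append_eq_append_iff.1 hab with ⟨c, hw₁, hb⟩ | ⟨c, ha, hw₂⟩
  · obtain ⟨ha, hc⟩ := h₁ a c hw₁.symm i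
    rw [hb, disp_append, Pi.add_apply, mul_add]
    push_cast
    constructor <;> linarith
  · obtain ⟨hc, hb⟩ := h₂ c b hw₂.symm i
    rw [ha, disp_append, Pi.add_apply, mul_add]
    push_cast
    constructor <;> linarith

theorem AlmostMonotone.append_of_mem_orthant (h₁ : AlmostMonotone s L w₁)
    (h₂ : AlmostMonotone s L w₂) (hw₁ : disp w₁ ∈ orthant s) (hw₂ : disp w₂ ∈ orthant s) :
    AlmostMonotone s L (w₁ ++ w₂) := by
  rintro a b hab i
  have hleft := mem_orthant.1 hw₁ i
  have hright := mem_orthant.1 hw₂ i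
  rcases List.append_eq_append_iff.1 hab with ⟨c, hw₁, hb⟩ | ⟨c, ha, hw₂⟩
  · obtain ⟨ha, hc⟩ := h₁ a c hw₁.symm i
    rw [hb, disp_append, Pi.add_apply, mul_add]
    constructor <;> linarith
  · obtain ⟨hc, hb⟩ := h₂ c b hw₂.symm i
    rw [ha, disp_append, Pi.add_apply, mul_add]
    constructor <;> linarith

theorem AlmostMonotone.flatten_replicate (h : AlmostMonotone s L β) (hβ : disp β ∈ orthant s)
    (n : ℕ) : AlmostMonotone s L (List.replicate n β).flatten := by
  induction n with
  | zero =>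
    rintro a b hab i
    obtain ⟨rfl, rfl⟩ : a = [] ∧ b = [] := by simpa using hab
    simp [disp]
  | succ n ih =>
    rw [List.replicate_succ, List.flatten_cons]
    refine h.append_of_mem_orthant ih hβ ?_
    rw [disp_flatten_replicate]
    exact nsmul_mem hβ n

theorem IsLPSFrom.almostMonotone {ρ : LPS d} (hρ : IsLPSFrom T p q ρ)
    (hs : ∀ c ∈ ρ.2, disp c.1 ∈ orthant s) (hw : InLang ρ w) :
    AlmostMonotone s (lpsLen ρ * tnorm T) w := by
  obtain ⟨α, cs⟩ := ρ
  induction cs generalizing α p w with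
  | nil =>
    rw [inLang_nil.1 hw, lpsLen_nil]
    exact almostMonotone_of_forall_mem (isLPSFrom_nil.1 hρ).2
  | cons c cs ih =>
    obtain ⟨r, hα, -, hβ, hcs⟩ := isLPSFrom_cons.1 hρ
    obtain ⟨n, w', hw', rfl⟩ := inLang_cons.1 hw
    obtain ⟨hc, hs⟩ := List.forall_mem_cons.1 hs
    rw [lpsLen_cons, add_mul, add_mul]
    exact (almostMonotone_of_forall_mem hα.2).append
      (((almostMonotone_of_forall_mem hβ.2).flatten_replicate hc n).append (ih _ hcs hs hw'))

theorem AlmostMonotone.run {u : Vec d} (h : AlmostMonotone s L w) (hw : IsPathIn T p q w)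
    (hu : ∀ i, (L : ℤ) ≤ u i) (hv : ∀ i, (L : ℤ) ≤ (u + disp w) i) :
    Run T (NatSet d) p u q (u + disp w) w := by
  refine ⟨hw.2, hw.1, fun i => (Nat.cast_nonneg L).trans (hu i), rfl, fun k _ _ i => ?_⟩
  have hsplit := List.take_append_drop k w
  obtain ⟨hleft, hright⟩ := h _ _ hsplit i
  have hdisp : disp w i = disp (w.take k) i + disp (w.drop k) i := by
    rw [← Pi.add_apply, ← disp_append, hsplit]
  have := hu i
  have := hv i
  rw [Pi.add_apply] at this ⊢
  rcases Int.units_eq_one_or (s i) with hsi | hsi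
  all_goals
    simp only [hsi, Units.val_one, Units.val_neg, one_mul, neg_mul] at hleft hright
    linarith

theorem mem_dispSet_two_cycles (a b c β₁ β₂ : List (Trans d)) (m n : ℕ) :
    disp (a ++ b ++ c) + m • disp β₁ + n • disp β₂ ∈ DispSet (a, [(β₁, b), (β₂, c)]) := by
  refine ⟨_, inLang_cons.2 ⟨m, _, inLang_cons.2 ⟨n, _, inLang_nil.2 rfl, rfl⟩, rfl⟩, ?_⟩
  simp only [disp_append, disp_flatten_replicate]
  abel

theorem isLPSFrom_two_cycles {r₁ r₂ : ℕ} {a b c β₁ β₂ : List (Trans d)}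
    (ha : IsPathIn T p r₁ a) (hb : IsPathIn T r₁ r₂ b) (hc : IsPathIn T r₂ q c)
    (hβ₁ : IsPathIn T r₁ r₁ β₁) (hβ₂ : IsPathIn T r₂ r₂ β₂) (hne₁ : β₁ ≠ []) (hne₂ : β₂ ≠ []) :
    IsLPSFrom T p q (a, [(β₁, b), (β₂, c)]) :=
  isLPSFrom_cons.2
    ⟨r₁, ha, hne₁, hβ₁, isLPSFrom_cons.2 ⟨r₂, hb, hne₂, hβ₂, isLPSFrom_nil.2 hc⟩⟩

theorem exists_lps_of_two_cycles {π β₁ β₂ : List (Trans d)} {r₁ r₂ : ℕ} (hπ : IsPathIn T p q π)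
    (hr₁ : r₁ ∈ visited p π) (hr₂ : r₂ ∈ visited p π) (hβ₁ : IsPathIn T r₁ r₁ β₁)
    (hβ₂ : IsPathIn T r₂ r₂ β₂) (hne₁ : β₁ ≠ []) (hne₂ : β₂ ≠ []) :
    ∃ ρ : LPS d, IsLPSFrom T p q ρ ∧ numCycles ρ = 2 ∧
      lpsLen ρ = π.length + β₁.length + β₂.length ∧ (∀ s ∈ ρ.2, s.1 = β₁ ∨ s.1 = β₂) ∧
      ∀ m n : ℕ, disp π + m • disp β₁ + n • disp β₂ ∈ DispSet ρ := by
  obtain ⟨a, b, rfl, ha, hb⟩ := hπ.exists_split_of_mem_visited hr₁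
  by_cases hr₂a : r₂ ∈ visited p a
  · obtain ⟨a₁, a₂, rfl, ha₁, ha₂⟩ := ha.exists_split_of_mem_visited hr₂a
    refine ⟨_, isLPSFrom_two_cycles ha₁ ha₂ hb hβ₂ hβ₁ hne₂ hne₁, rfl, ?_, by simp,
      fun m n => ?_⟩
    · simp only [lpsLen_cons, lpsLen_nil, List.length_append]
      omega
    · rw [add_right_comm]
      exact mem_dispSet_two_cycles _ _ _ _ _ n m
  · have hr₂b : r₂ ∈ visited r₁ b :=
      List.mem_cons_of_mem _ ((List.mem_append.1 (visited_append ▸ hr₂)).resolve_left hr₂a)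
    obtain ⟨b₁, b₂, rfl, hb₁, hb₂⟩ := hb.exists_split_of_mem_visited hr₂b
    refine ⟨_, isLPSFrom_two_cycles ha hb₁ hb₂ hβ₁ hβ₂ hne₁ hne₂, rfl, ?_, by simp,
      fun m n => ?_⟩
    · simp only [lpsLen_cons, lpsLen_nil, List.length_append]
      omega
    · rw [← List.append_assoc]
      exact mem_dispSet_two_cycles _ _ _ _ _ m n

end Schemes

section BlockDecomposition

variable {d : ℕ} {T : Finset (Trans d)} {K p q : ℕ} {π₀ : List (Trans d)}
  {Bs : List (List (List (Trans d)))}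

theorem disp_flatten_flatten (Bs : List (List (List (Trans d)))) :
    disp Bs.flatten.flatten = (Bs.map fun B => disp B.flatten).sum := by
  rw [List.flatten_flatten, disp_flatten, List.map_map]
  rfl

theorem exists_isBlock_orthant {R : List ℕ} {E : List (List (Trans d))} {m M : ℕ} (hM : 0 < M)
    (hmM : m * tnorm T ≤ M) (hmK : m ≤ K) (hK : blockSize M d * M ≤ K)
    (hE : ∀ c ∈ E, IsAttached T m R c) :
    ∃ (s : Fin d → ℤˣ) (Bs : List (List (List (Trans d)))),
      disp E.flatten = disp Bs.flatten.flatten ∧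
      ∀ B ∈ Bs, IsBlock T K R B ∧ disp B.flatten ∈ orthant s := by
  have hnorm : ∀ c ∈ E, vnorm (disp c) ≤ M := fun c hc =>
    let ⟨hlen, _, _, hpath⟩ := hE c hc
    (vnorm_disp_le hpath.2).trans ((Nat.mul_le_mul_right _ hlen).trans hmM)
  obtain ⟨s, Bs, hperm, hBs⟩ := exists_orthant_blocks disp hM hnorm
  refine ⟨s, Bs, ?_, fun B hB => ?_⟩
  · rw [disp_flatten, disp_flatten, (hperm.map disp).sum_eq]
  obtain ⟨hlen, horthant⟩ := hBs B hB
  have hBE (c) (hc : c ∈ B) : c ∈ E := hperm.mem_iff.2 (List.mem_flatten_of_mem hB hc)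
  have hsum : vnorm (B.map disp).sum ≤ B.length * M := by
    simpa using vnorm_sum_le (B.map disp)
      (List.forall_mem_map.2 fun c hc => hnorm c (hBE c hc))
  have hMK : M ≤ K := (Nat.le_mul_of_pos_left M (blockSize_pos M d)).trans hK
  rw [disp_flatten]
  refine ⟨⟨hlen.trans ((Nat.le_mul_of_pos_right _ hM).trans hK), fun c hc => ?_,
    fun c hc => (hnorm c (hBE c hc)).trans hMK, ?_⟩, horthant⟩
  · exact (hE c (hBE c hc)).imp_left fun h => h.trans hmK
  · rw [disp_flatten]
    exact hsum.trans ((Nat.mul_le_mul_right M hlen).trans hK)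

theorem exists_short_path_add_mem (A : AddSubmonoid (Vec d)) {e : ℕ} (he : 0 < e)
    (hπ₀ : IsPathIn T p q π₀) (hBs : ∀ B ∈ Bs, IsBlock T K (visited p π₀) B)
    (hA : ∀ B ∈ Bs, e • disp B.flatten ∈ A) :
    ∃ π₁, IsPathIn T p q π₁ ∧ π₁.length ≤ π₀.length + e * (2 * K + 1) ^ d * K * K ∧
      visited p π₀ ⊆ visited p π₁ ∧
      ∃ w ∈ A, disp π₀ + disp Bs.flatten.flatten = disp π₁ + w := by
  obtain ⟨Bs', hsub, hBs'len, w, hw, hsum⟩ :=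
    exists_short_sublist_sum_add_mem A (normBall d K) he (fun B => disp B.flatten) Bs
      (fun B hB => mem_normBall.2 (hBs B hB).vnorm_disp_flatten_le) hA
  have hE : ∀ c ∈ Bs'.flatten, IsAttached T K (visited p π₀) c := fun c hc =>
    let ⟨B, hB, hcB⟩ := List.mem_flatten.1 hc
    (hBs B (hsub hB)).isAttached c hcB
  obtain ⟨π₁, hπ₁, hlen, hvisited, hdisp⟩ := exists_insertion hπ₀ hE
  refine ⟨π₁, hπ₁, hlen.trans ?_, hvisited, w, hw, ?_⟩
  · rw [card_normBall] at hBs'len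
    gcongr
    exact (length_flatten_le fun B hB => (hBs B (hsub hB)).length_le).trans
      (Nat.mul_le_mul_right K hBs'len)
  · rw [hdisp, disp_flatten_flatten Bs, disp_flatten_flatten Bs', hsum, add_assoc]

end BlockDecomposition

section Assembly

variable {T : Finset (Trans 2)} {K q : ℕ} {s : Fin 2 → ℤˣ} {π₀ : List (Trans 2)}
  {Bs : List (List (List (Trans 2)))}

theorem mul_nsmul_mem_closure_pair {G : Type*} [AddCommMonoid G] {x y z : G} {e : ℕ} (N₁ N₂ : ℕ)
    (h : e • z ∈ AddSubmonoid.closure {x, y}) :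
    (e * (N₁ * N₂)) • z ∈ AddSubmonoid.closure {N₁ • x, N₂ • y} := by
  obtain ⟨m, n, hmn⟩ := (AddSubmonoid.mem_closure_pair _ _ _).1 h
  refine (AddSubmonoid.mem_closure_pair _ _ _).2 ⟨N₂ * m, N₁ * n, ?_⟩
  rw [mul_comm e, mul_smul _ e, ← hmn, smul_add]
  simp only [← mul_smul]
  congr 2 <;> ring

theorem exists_spanning_cycles (hπ₀ : IsPathIn T q q π₀) (hlen : π₀.length ≤ K)
    (hnorm : vnorm (disp π₀) ≤ K) (hBs : ∀ B ∈ Bs, IsBlock T K (visited q π₀) B)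
    (hs : ∀ B ∈ Bs, disp B.flatten ∈ orthant s) (hne : ∃ B ∈ Bs, disp B.flatten ≠ 0) :
    ∃ β₁ β₂ : List (Trans 2), (∀ β ∈ [β₁, β₂], β ≠ [] ∧ β.length ≤ 12 * K ^ 4 ∧
        disp β ∈ orthant s ∧ ∃ r ∈ visited q π₀, IsPathIn T r r β) ∧
      ∃ e, 0 < e ∧ e ≤ 50 * K ^ 6 ∧
        ∀ B ∈ Bs, e • disp B.flatten ∈ AddSubmonoid.closure {disp β₁, disp β₂} := by
  have hcycle (B) (hB : B ∈ Bs) (hB0 : disp B.flatten ≠ 0) :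
      ∃ (β : List (Trans 2)) (N : ℕ), (β ≠ [] ∧ β.length ≤ 12 * K ^ 4 ∧ disp β ∈ orthant s ∧
        ∃ r ∈ visited q π₀, IsPathIn T r r β) ∧ 0 < N ∧ N ≤ 5 * K ^ 2 ∧
        disp β = N • disp B.flatten := by
    obtain ⟨r, hr, β, N, hβ, hβlen, hN, hNK, hdisp⟩ :=
      (hBs B hB).exists_cycle hπ₀ hlen hnorm hB0
    refine ⟨β, N, ⟨?_, hβlen, hdisp ▸ nsmul_mem (hs B hB) N, r, hr, hβ⟩, hN, hNK, hdisp⟩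
    rintro rfl
    exact smul_ne_zero hN.ne' hB0 hdisp.symm
  let S : Set (Vec 2) := {x | ∃ B ∈ Bs, disp B.flatten = x}
  obtain ⟨_, ⟨B₁, hB₁, rfl⟩, _, ⟨B₂, hB₂, rfl⟩, hx, hy, e, he, heK, hspan⟩ :=
    exists_conic_pair (S := S) (s := s) (K := K)
      ((Bs.map fun B => disp B.flatten).finite_toSet.subset (by simp [S]))
      (by simpa [S] using hne) (by simpa [S] using hs)
      (by simpa [S] using fun B hB => (hBs B hB).vnorm_disp_flatten_le)
  obtain ⟨β₁, N₁, hβ₁, hN₁, hN₁K, hdisp₁⟩ := hcycle B₁ hB₁ hx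
  obtain ⟨β₂, N₂, hβ₂, hN₂, hN₂K, hdisp₂⟩ := hcycle B₂ hB₂ hy
  refine ⟨β₁, β₂, by simp [hβ₁, hβ₂], e * (N₁ * N₂), by positivity, ?_, fun B hB => ?_⟩
  · calc e * (N₁ * N₂) ≤ 2 * K ^ 2 * (5 * K ^ 2 * (5 * K ^ 2)) := by gcongr
      _ = 50 * K ^ 6 := by ring
  · rw [hdisp₁, hdisp₂]
    exact mul_nsmul_mem_closure_pair N₁ N₂ (hspan _ ⟨B, hB, rfl⟩)

/-- The displacement `w` is realized by a zigzag-free linear path scheme from `p` to `q` of length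
at most `F` with at most two cycles. -/
def HasShortScheme (T : Finset (Trans 2)) (p q F : ℕ) (w : Vec 2) : Prop :=
  ∃ ρ : LPS 2, IsLPSFrom T p q ρ ∧ ZigzagFree ρ ∧ lpsLen ρ ≤ F ∧ numCycles ρ ≤ 2 ∧ w ∈ DispSet ρ

theorem HasShortScheme.mono {p F F' : ℕ} {w : Vec 2} (h : HasShortScheme T p q F w)
    (hF : F ≤ F') : HasShortScheme T p q F' w :=
  let ⟨ρ, hρ, hzigzag, hlen, h⟩ := h
  ⟨ρ, hρ, hzigzag, hlen.trans hF, h⟩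

theorem IsPathIn.hasShortScheme {p : ℕ} {π : List (Trans 2)} (hπ : IsPathIn T p q π) :
    HasShortScheme T p q π.length (disp π) :=
  ⟨(π, []), isLPSFrom_nil.2 hπ, ⟨_, isQuadrant_orthant 1, by simp⟩, lpsLen_nil.le, Nat.zero_le 2,
    π, inLang_nil.2 rfl, rfl⟩

theorem hasShortScheme_of_two_cycles {p F : ℕ} {π β₁ β₂ : List (Trans 2)} {w : Vec 2}
    (hπ : IsPathIn T p q π) (hβ : ∀ β ∈ [β₁, β₂], β ≠ [] ∧ disp β ∈ orthant s ∧
      ∃ r ∈ visited p π, IsPathIn T r r β)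
    (hF : π.length + β₁.length + β₂.length ≤ F)
    (hw : w ∈ AddSubmonoid.closure {disp β₁, disp β₂}) :
    HasShortScheme T p q F (disp π + w) := by
  obtain ⟨hne₁, hs₁, r₁, hr₁, hβ₁⟩ := hβ β₁ (by simp)
  obtain ⟨hne₂, hs₂, r₂, hr₂, hβ₂⟩ := hβ β₂ (by simp)
  obtain ⟨ρ, hρ, hk, hlen, hcycles, hdisp⟩ :=
    exists_lps_of_two_cycles hπ hr₁ hr₂ hβ₁ hβ₂ hne₁ hne₂
  obtain ⟨m, n, rfl⟩ := (AddSubmonoid.mem_closure_pair _ _ _).1 hw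
  refine ⟨ρ, hρ, ⟨_, isQuadrant_orthant s, fun c hc => ?_⟩, hlen.trans_le hF, hk.le,
    add_assoc (disp π) _ _ ▸ hdisp m n⟩
  rcases hcycles c hc with h | h <;> rwa [h]

theorem hasShortScheme_of_isBlock (hπ₀ : IsPathIn T q q π₀) (hlen : π₀.length ≤ K)
    (hnorm : vnorm (disp π₀) ≤ K) (hBs : ∀ B ∈ Bs, IsBlock T K (visited q π₀) B)
    (hs : ∀ B ∈ Bs, disp B.flatten ∈ orthant s) :
    HasShortScheme T q q (475 * K ^ 10) (disp π₀ + disp Bs.flatten.flatten) := by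
  by_cases hne : ∃ B ∈ Bs, disp B.flatten ≠ 0
  · obtain ⟨β₁, β₂, hβ, e, he, heK, hspan⟩ := exists_spanning_cycles hπ₀ hlen hnorm hBs hs hne
    obtain ⟨π₁, hπ₁, hπ₁len, hvisited, w, hw, hsum⟩ := exists_short_path_add_mem _ he hπ₀ hBs hspan
    have hK : 1 ≤ K := by
      obtain ⟨B, hB, hB0⟩ := hne
      exact (vnorm_pos_iff.2 hB0).trans_le (hBs B hB).vnorm_disp_flatten_le
    have hpow {i : ℕ} (hi : i ≤ 10) : K ^ i ≤ K ^ 10 := Nat.pow_le_pow_right hK hi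
    rw [hsum]
    refine hasShortScheme_of_two_cycles hπ₁ (s := s) (fun β hmem => ?_) ?_ hw
    · obtain ⟨hβne, -, hβs, r, hr, hβr⟩ := hβ β hmem
      exact ⟨hβne, hβs, r, hvisited hr, hβr⟩
    · calc π₁.length + β₁.length + β₂.length
          ≤ K + 50 * K ^ 6 * (2 * K + K) ^ 2 * K * K + 12 * K ^ 4 + 12 * K ^ 4 := by
            gcongr
            · exact hπ₁len.trans (by gcongr)
            · exact (hβ β₁ (by simp)).2.1
            · exact (hβ β₂ (by simp)).2.1
        _ = K ^ 1 + 450 * K ^ 10 + 24 * K ^ 4 := by ring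
        _ ≤ K ^ 10 + 450 * K ^ 10 + 24 * K ^ 10 := by
            gcongr ?_ + _ + 24 * ?_ <;> exact hpow (by norm_num)
        _ = 475 * K ^ 10 := by ring
  · push Not at hne
    rw [disp_flatten_flatten, List.sum_eq_zero (List.forall_mem_map.2 hne), add_zero]
    have hK10 : K ≤ K ^ 10 := Nat.le_self_pow (by norm_num) K
    exact hπ₀.hasShortScheme.mono (by omega)

theorem blockSize_sq_mul_sq_le {n : ℕ} (hn : 2 ≤ n) : blockSize (n ^ 2) 2 * n ^ 2 ≤ n ^ 14 := by
  have hstep (k : ℕ) : 2 * n ^ (k + 2) + 1 ≤ n ^ (k + 4) := by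
    have : 1 ≤ n ^ (k + 2) := Nat.one_le_pow _ _ (by omega)
    calc 2 * n ^ (k + 2) + 1 ≤ n ^ (k + 2) * 2 ^ 2 := by omega
      _ ≤ n ^ (k + 2) * n ^ 2 := by gcongr
      _ = n ^ (k + 4) := by ring
  calc blockSize (n ^ 2) 2 * n ^ 2
      = (2 * ((2 * n ^ 2 + 1) * n ^ 2) + 1) * (2 * n ^ 2 + 1) * n ^ 2 := by simp [blockSize]
    _ ≤ (2 * (n ^ 4 * n ^ 2) + 1) * n ^ 4 * n ^ 2 := by gcongr <;> exact hstep 0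
    _ = (2 * n ^ 6 + 1) * n ^ 6 := by ring
    _ ≤ n ^ 8 * n ^ 6 := by gcongr; exact hstep 4
    _ = n ^ 14 := by ring

theorem IsPathIn.hasShortScheme_of_two_le {Q : Finset ℕ} (hT : ∀ t ∈ T, t.2.2 ∈ Q) (hq : q ∈ Q)
    (hn : 2 ≤ Q.card + tnorm T) {π : List (Trans 2)} (hπ : IsPathIn T q q π) :
    HasShortScheme T q q ((Q.card + tnorm T) ^ 149) (disp π) := by
  set n := Q.card + tnorm T
  have hQn : Q.card ≤ n := Nat.le_add_right _ _
  have hTn : tnorm T ≤ n := Nat.le_add_left _ _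
  have hpow {i : ℕ} (hi : i ≤ 14) : n ^ i ≤ n ^ 14 := Nat.pow_le_pow_right (by omega) hi
  obtain ⟨π₀, E, hπ₀, hlen, hE, hdisp⟩ := exists_skeleton hT hq hπ
  have hlen3 : π₀.length ≤ n ^ 3 :=
    calc π₀.length ≤ n * (n + n) := hlen.trans (by gcongr; omega)
      _ = n * n * 2 := by ring
      _ ≤ n * n * n := by gcongr
      _ = n ^ 3 := by ring
  have hnorm : vnorm (disp π₀) ≤ n ^ 14 :=
    calc vnorm (disp π₀) ≤ n ^ 3 * n := (vnorm_disp_le hπ₀.2).trans (by gcongr)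
      _ ≤ n ^ 14 := hpow (i := 4) (by norm_num)
  have hM : Q.card * tnorm T ≤ n ^ 2 := (Nat.mul_le_mul hQn hTn).trans (sq n).ge
  obtain ⟨s, Bs, hBs, hblocks⟩ := exists_isBlock_orthant (by positivity) hM
    (hQn.trans (Nat.le_self_pow (by norm_num) n)) (blockSize_sq_mul_sq_le hn) hE
  rw [hdisp, hBs]
  refine (hasShortScheme_of_isBlock hπ₀ (hlen3.trans (hpow (by norm_num))) hnorm
    (fun B hB => (hblocks B hB).1) fun B hB => (hblocks B hB).2).mono ?_
  calc 475 * (n ^ 14) ^ 10 ≤ 2 ^ 9 * (n ^ 14) ^ 10 := by gcongr; norm_num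
    _ ≤ n ^ 9 * (n ^ 14) ^ 10 := by gcongr
    _ = n ^ 149 := by ring

theorem IsPathIn.hasShortScheme_pow {Q : Finset ℕ} (hT : ∀ t ∈ T, t.2.2 ∈ Q) (hq : q ∈ Q)
    {π : List (Trans 2)} (hπ : IsPathIn T q q π) :
    HasShortScheme T q q ((Q.card + tnorm T) ^ 149) (disp π) := by
  rcases le_or_gt 2 (Q.card + tnorm T) with hn | hn
  · exact hπ.hasShortScheme_of_two_le hT hq hn
  · have hQ : 0 < Q.card := Finset.card_pos.2 ⟨q, hq⟩
    have hzero : disp π = disp ([] : List (Trans 2)) := by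
      have hnorm := vnorm_disp_le hπ.2
      rw [show tnorm T = 0 by omega, mul_zero, Nat.le_zero] at hnorm
      exact not_not.1 fun hne => (vnorm_pos_iff.2 hne).ne' hnorm
    exact hzero ▸ isPathIn_nil.hasShortScheme.mono (Nat.zero_le _)

theorem HasShortScheme.exists_run {p F : ℕ} {u w : Vec 2} (h : HasShortScheme T p q F w)
    (hu : ∀ i, ((F * tnorm T : ℕ) : ℤ) ≤ u i) (hv : ∀ i, ((F * tnorm T : ℕ) : ℤ) ≤ (u + w) i) :
    ∃ ρ, IsLPSFrom T p q ρ ∧ lpsLen ρ ≤ F ∧ numCycles ρ ≤ 2 ∧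
      ∃ π, InLang ρ π ∧ Run T (NatSet 2) p u q (u + w) π := by
  obtain ⟨ρ, hρ, ⟨Z, hZ, hcycles⟩, hlen, hk, π, hπ, rfl⟩ := h
  obtain ⟨s, rfl⟩ := hZ.exists_eq_orthant
  have hL : ((lpsLen ρ * tnorm T : ℕ) : ℤ) ≤ (F * tnorm T : ℕ) :=
    Nat.cast_le.2 (Nat.mul_le_mul_right _ hlen)
  exact ⟨ρ, hρ, hlen, hk, π, hπ, (hρ.almostMonotone hcycles hπ).run (hρ.isPathIn hπ)
    (fun i => hL.trans (hu i)) fun i => hL.trans (hv i)⟩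

end Assembly

/-- Proposition, part (a). Reachability between configurations
of a 2-VASS with the same state whose counter values all exceed a polynomial
bound `D` is captured by small linear path schemes with at most two cycles. -/
theorem statement3 :
    ∃ c₁ c₂ : ℕ, ∀ (Q : Finset ℕ) (T : Finset (Trans 2)),
      (∀ t ∈ T, t.1 ∈ Q ∧ t.2.2 ∈ Q) →
      ∃ D : ℕ, D ≤ (Q.card + tnorm T) ^ c₁ ∧
      ∃ R : Finset (LPS 2),
        (∀ ρ ∈ R, ∃ p q, IsLPSFrom T p q ρ) ∧
        (∀ q ∈ Q, ∀ u v : Vec 2, (∀ i, (D : ℤ) ≤ u i) → (∀ i, (D : ℤ) ≤ v i) →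
          (Reach T (NatSet 2) q u q v ↔ SReach T R (NatSet 2) q u q v)) ∧
        (∀ ρ ∈ R, lpsLen ρ ≤ (Q.card + tnorm T) ^ c₂) ∧
        (∀ ρ ∈ R, numCycles ρ ≤ 2) := by
  refine ⟨150, 149, fun Q T hT => ?_⟩
  set F := (Q.card + tnorm T) ^ 149
  have hschemes := finite_isLPSFrom_lpsLen_le T F 2
  refine ⟨F * tnorm T, ?_, hschemes.toFinset, ?_, fun q hq u v hu hv => ⟨?_, ?_⟩, ?_, ?_⟩
  · rw [pow_succ]
    exact Nat.mul_le_mul_left F (Nat.le_add_left _ _)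
  · exact fun ρ hρ => (hschemes.mem_toFinset.1 hρ).1
  · rintro ⟨π, hπT, hπ, -, rfl, -⟩
    have hscheme := IsPathIn.hasShortScheme_pow (fun t ht => (hT t ht).2) hq ⟨hπ, hπT⟩
    obtain ⟨ρ, hρ, hlen, hk, hrun⟩ := hscheme.exists_run hu hv
    exact ⟨ρ, hschemes.mem_toFinset.2 ⟨⟨q, q, hρ⟩, hlen, hk⟩, hrun⟩
  · rintro ⟨_, _, π, _, hrun⟩
    exact ⟨π, hrun⟩
  · exact fun ρ hρ => (hschemes.mem_toFinset.1 hρ).2.1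
  · exact fun ρ hρ => (hschemes.mem_toFinset.1 hρ).2.2

end VASS
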